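/- The asymptotic variety S_𝒫 of the Pinchuk map 𝒫 equals the parametrized curve {(p(s), q(s)) : s ∈ ℝ}, where p(s) = s² − 1 and q(s) = −75s⁵ + (345/4)s⁴ − 29s³ + (117/2)s² − 163/4. That is, a point α ∈ ℝ² is the limit of 𝒫(ξ_k) for some sequence (ξ_k) with ‖ξ_k‖ → ∞ if and only if α = (p(s), q(s)) for some s ∈ ℝ. -/

import Mathlib

open Filter Topology

noncomputable section

/-- `t = x·y − 1` -/
def tP (x y : ℝ) : ℝ := x * y - 1

/-- `h = t·(x·t + 1)` -/
def hP (x y : ℝ) : ℝ := tP x y * (x * tP x y + 1)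

/-- `f = (x·t + 1)²·(t² + y)` -/
def fP (x y : ℝ) : ℝ := (x * tP x y + 1) ^ 2 * ((tP x y) ^ 2 + y)

/-- First component `P = f + h` of the Pinchuk map. -/
def PP (x y : ℝ) : ℝ := fP x y + hP x y

/-- Second component `Q` of the Pinchuk map. -/
def QP (x y : ℝ) : ℝ :=
  -(tP x y) ^ 2 - 6 * tP x y * hP x y * (hP x y + 1) - 170 * fP x y * hP x y
    - 91 * (hP x y) ^ 2 - 195 * fP x y * (hP x y) ^ 2 - 69 * (hP x y) ^ 3
    - 75 * fP x y * (hP x y) ^ 3 - (75 / 4) * (hP x y) ^ 4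

/-- The Pinchuk map `𝒫 = (P, Q) : ℝ² → ℝ²`. -/
def Pinchuk (z : ℝ × ℝ) : ℝ × ℝ := (PP z.1 z.2, QP z.1 z.2)
/-- `p(s) = s² − 1`. -/
def pParam (s : ℝ) : ℝ := s ^ 2 - 1

/-- `q(s) = −75s⁵ + (345/4)s⁴ − 29s³ + (117/2)s² − 163/4`. -/
def qParam (s : ℝ) : ℝ :=
  -75 * s ^ 5 + (345 / 4) * s ^ 4 - 29 * s ^ 3 + (117 / 2) * s ^ 2 - 163 / 4

/-! Along an ultrafilter every real function either converges or tends to infinity. On an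
ultrafilter going to infinity in the plane along which `P` and `Q` converge, comparing leading terms
in `Q` shows that `h`, and then `t`, converges. If `y` tended to infinity, `x = (t + 1) / y → 0`
would give `f ~ y`; so `x → ∞`, whence `t ^ 2 = (h - t) / x → 0` and
`f = (h + t + 1 / x) (h + 1) → c (c + 1)` with `c = lim h`. The limit of `(P, Q)` is therefore
`(p (c + 1), q (c + 1))`. Conversely, the level curve `h = c`, followed as `t → 0`, realizes this
limit for every `c`. -/

open Bornology

section AsymptoticVariety

variable {Y : Type*} [TopologicalSpace Y]

/-- The asymptotic variety `S_F` of a map `F`: the limit values of `F` at infinity, encoded as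
cluster points along the filter of cobounded sets. On normed spaces they are the limits along
sequences going to infinity. -/
def asymptoticVariety {X : Type*} [Bornology X] (F : X → Y) : Set Y :=
  {α | MapClusterPt α (cobounded X) F}

theorem mem_asymptoticVariety_iff_exists_seq {E : Type*} [SeminormedAddCommGroup E]
    [FirstCountableTopology Y] {F : E → Y} {α : Y} :
    α ∈ asymptoticVariety F ↔
      ∃ ξ : ℕ → E, Tendsto (fun k ↦ ‖ξ k‖) atTop atTop ∧
        Tendsto (fun k ↦ F (ξ k)) atTop (𝓝 α) := by
  simp only [tendsto_norm_atTop_iff_cobounded]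
  constructor
  · intro hα
    have : (cobounded E).IsCountablyGenerated := comap_norm_atTop (E := E) ▸ inferInstance
    obtain ⟨ξ, hFξ, hξ⟩ := hα.exists_seq_tendsto
    exact ⟨ξ, hξ, hFξ⟩
  · rintro ⟨ξ, hξ, hFξ⟩
    exact hFξ.mapClusterPt.of_comp hξ

end AsymptoticVariety

section Cobounded

variable {ι : Type*}

theorem tendsto_cobounded_or_exists_tendsto_nhds {X : Type*} [PseudoMetricSpace X] [ProperSpace X]
    (U : Ultrafilter ι) (g : ι → X) :
    Tendsto g U (cobounded X) ∨ ∃ a, Tendsto g U (𝓝 a) := by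
  refine or_iff_not_imp_left.2 fun h ↦ ?_
  have hdisj : Disjoint ((U.map g : Ultrafilter X) : Filter X) (cocompact X) := by
    rwa [Ultrafilter.disjoint_iff_not_le, ← Metric.cobounded_eq_cocompact]
  obtain ⟨K, hKU, hK⟩ := (disjoint_cocompact_right _).1 hdisj
  obtain ⟨a, -, ha⟩ := hK.ultrafilter_le_nhds' _ hKU
  exact ⟨a, ha⟩

theorem eventually_nhdsNE_ne_and_ne {X : Type*} [TopologicalSpace X] [T1Space X] (a b : X) :
    ∀ᶠ t in 𝓝[≠] a, t ≠ a ∧ t ≠ b :=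
  eventually_mem_nhdsWithin.and
    (nhdsNE_le_cofinite a (Set.finite_singleton b).eventually_cofinite_notMem)

theorem tendsto_div_zero_of_tendsto_cobounded {𝕜 : Type*} [NormedDivisionRing 𝕜] {l : Filter ι}
    {g v : ι → 𝕜} {a : 𝕜} (hg : Tendsto g l (𝓝 a)) (hv : Tendsto v l (cobounded 𝕜)) :
    Tendsto (fun i ↦ g i / v i) l (𝓝 0) := by
  simpa only [div_eq_mul_inv, mul_zero, Function.comp_apply] using
    hg.mul (tendsto_inv₀_cobounded.comp hv)

end Cobounded

section Identities

variable (x y : ℝ)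

theorem hP_eq_mul_sq_add : hP x y = x * tP x y ^ 2 + tP x y := by
  unfold hP; ring

theorem fP_mul_hP_sub_tP : fP x y * (hP x y - tP x y) = hP x y ^ 2 * (hP x y + 1) := by
  unfold fP hP tP; ring

variable {x} in
theorem fP_eq_of_ne_zero (hx : x ≠ 0) :
    fP x y = (hP x y + tP x y + x⁻¹) * (hP x y + 1) := by
  unfold fP hP tP
  field_simp
  ring

end Identities

section Limits

variable {ι : Type*} {l : Filter ι} {x y : ι → ℝ} {a b c d : ℝ}

theorem tendsto_fP_div_hP (hPP : Tendsto (fun i ↦ PP (x i) (y i)) l (𝓝 a))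
    (hh : Tendsto (fun i ↦ hP (x i) (y i)) l (cobounded ℝ)) :
    Tendsto (fun i ↦ fP (x i) (y i) / hP (x i) (y i)) l (𝓝 (-1)) := by
  rw [← zero_sub]
  refine ((tendsto_div_zero_of_tendsto_cobounded hPP hh).sub_const 1).congr' ?_
  filter_upwards [hh.eventually_ne_cobounded 0] with i hi
  rw [PP]
  field_simp
  ring

theorem tendsto_tP_div_hP_sq (hPP : Tendsto (fun i ↦ PP (x i) (y i)) l (𝓝 a))
    (hh : Tendsto (fun i ↦ hP (x i) (y i)) l (cobounded ℝ)) :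
    Tendsto (fun i ↦ tP (x i) (y i) / hP (x i) (y i) ^ 2) l (𝓝 1) := by
  have hf := tendsto_fP_div_hP hPP hh
  have hw : Tendsto (fun i ↦ (hP (x i) (y i))⁻¹) l (𝓝 0) := tendsto_inv₀_cobounded.comp hh
  have hlim := hw.sub ((hw.const_add 1).div hf (neg_ne_zero.2 one_ne_zero))
  rw [add_zero, div_neg, div_one, zero_sub, neg_neg] at hlim
  refine hlim.congr' ?_
  filter_upwards [hh.eventually_ne_cobounded 0, hf.eventually_ne (neg_ne_zero.2 one_ne_zero)]
    with i hi hfi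
  have hfi : fP (x i) (y i) ≠ 0 := left_ne_zero_of_mul hfi
  simp only [Pi.div_apply]
  field_simp
  linear_combination fP_mul_hP_sub_tP (x i) (y i)

theorem tendsto_QP_div_hP_pow (hPP : Tendsto (fun i ↦ PP (x i) (y i)) l (𝓝 a))
    (hh : Tendsto (fun i ↦ hP (x i) (y i)) l (cobounded ℝ)) :
    Tendsto (fun i ↦ QP (x i) (y i) / hP (x i) (y i) ^ 4) l (𝓝 (197 / 4)) := by
  have hf := tendsto_fP_div_hP hPP hh
  have ht := tendsto_tP_div_hP_sq hPP hh
  have hw : Tendsto (fun i ↦ (hP (x i) (y i))⁻¹) l (𝓝 0) := tendsto_inv₀_cobounded.comp hh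
  -- `Q / h ^ 4` in the coordinates `v = (1 / h, t / h ^ 2, f / h)`
  have hpoly : Continuous fun v : ℝ × ℝ × ℝ ↦
      -v.2.1 ^ 2 - 6 * v.2.1 * (1 + v.1) - 170 * v.2.2 * v.1 ^ 2 - 91 * v.1 ^ 2
        - 195 * v.2.2 * v.1 - 69 * v.1 - 75 * v.2.2 - 75 / 4 := by fun_prop
  have hlim := (hpoly.tendsto' _ (197 / 4) (by norm_num)).comp
    (hw.prodMk_nhds (ht.prodMk_nhds hf))
  refine hlim.congr' ?_
  filter_upwards [hh.eventually_ne_cobounded 0] with i hi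
  simp only [Function.comp_apply, QP]
  field_simp

theorem not_tendsto_hP_cobounded [l.NeBot] (hPP : Tendsto (fun i ↦ PP (x i) (y i)) l (𝓝 a))
    (hQP : Tendsto (fun i ↦ QP (x i) (y i)) l (𝓝 b)) :
    ¬ Tendsto (fun i ↦ hP (x i) (y i)) l (cobounded ℝ) := by
  intro hh
  have hzero := tendsto_div_zero_of_tendsto_cobounded hQP
    ((tendsto_pow_cobounded_cobounded four_ne_zero).comp hh)
  exact absurd (tendsto_nhds_unique hzero (tendsto_QP_div_hP_pow hPP hh)) (by norm_num)

theorem tendsto_QP_div_tP_sq (hf : Tendsto (fun i ↦ fP (x i) (y i)) l (𝓝 d))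
    (hh : Tendsto (fun i ↦ hP (x i) (y i)) l (𝓝 c))
    (ht : Tendsto (fun i ↦ tP (x i) (y i)) l (cobounded ℝ)) :
    Tendsto (fun i ↦ QP (x i) (y i) / tP (x i) (y i) ^ 2) l (𝓝 (-1)) := by
  have hw : Tendsto (fun i ↦ (tP (x i) (y i))⁻¹) l (𝓝 0) := tendsto_inv₀_cobounded.comp ht
  -- `Q / t ^ 2` in the coordinates `v = (1 / t, h, f)`
  have hpoly : Continuous fun v : ℝ × ℝ × ℝ ↦
      -1 - 6 * v.1 * v.2.1 * (v.2.1 + 1) - (170 * v.2.2 * v.2.1 + 91 * v.2.1 ^ 2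
        + 195 * v.2.2 * v.2.1 ^ 2 + 69 * v.2.1 ^ 3 + 75 * v.2.2 * v.2.1 ^ 3
        + 75 / 4 * v.2.1 ^ 4) * v.1 ^ 2 := by fun_prop
  have hlim := (hpoly.tendsto' _ (-1) (by ring)).comp (hw.prodMk_nhds (hh.prodMk_nhds hf))
  refine hlim.congr' ?_
  filter_upwards [ht.eventually_ne_cobounded 0] with i hi
  simp only [Function.comp_apply, QP]
  field_simp
  ring

theorem not_tendsto_tP_cobounded [l.NeBot] (hf : Tendsto (fun i ↦ fP (x i) (y i)) l (𝓝 d))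
    (hh : Tendsto (fun i ↦ hP (x i) (y i)) l (𝓝 c))
    (hQP : Tendsto (fun i ↦ QP (x i) (y i)) l (𝓝 b)) :
    ¬ Tendsto (fun i ↦ tP (x i) (y i)) l (cobounded ℝ) := by
  intro ht
  have hzero := tendsto_div_zero_of_tendsto_cobounded hQP
    ((tendsto_pow_cobounded_cobounded two_ne_zero).comp ht)
  exact absurd (tendsto_nhds_unique hzero (tendsto_QP_div_tP_sq hf hh ht)) (by norm_num)

theorem tendsto_fP_div_snd (ht : Tendsto (fun i ↦ tP (x i) (y i)) l (𝓝 a))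
    (hy : Tendsto y l (cobounded ℝ)) :
    Tendsto (fun i ↦ fP (x i) (y i) / y i) l (𝓝 1) := by
  have hx : Tendsto x l (𝓝 0) := by
    refine (tendsto_div_zero_of_tendsto_cobounded (ht.add_const 1) hy).congr' ?_
    filter_upwards [hy.eventually_ne_cobounded 0] with i hi
    rw [tP, sub_add_cancel, mul_div_cancel_right₀ _ hi]
  have hlim := (((hx.mul ht).add_const 1).pow 2).mul
    ((tendsto_div_zero_of_tendsto_cobounded (ht.pow 2) hy).add_const 1)
  rw [zero_mul, zero_add, one_pow, one_mul] at hlim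
  refine hlim.congr' ?_
  filter_upwards [hy.eventually_ne_cobounded 0] with i hi
  rw [fP]
  field_simp

theorem not_tendsto_snd_cobounded [l.NeBot] (ht : Tendsto (fun i ↦ tP (x i) (y i)) l (𝓝 a))
    (hf : Tendsto (fun i ↦ fP (x i) (y i)) l (𝓝 d)) : ¬ Tendsto y l (cobounded ℝ) := fun hy ↦
  zero_ne_one <| tendsto_nhds_unique (tendsto_div_zero_of_tendsto_cobounded hf hy)
    (tendsto_fP_div_snd ht hy)

theorem eq_zero_of_tendsto_tP [l.NeBot] (hx : Tendsto x l (cobounded ℝ))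
    (hh : Tendsto (fun i ↦ hP (x i) (y i)) l (𝓝 c))
    (ht : Tendsto (fun i ↦ tP (x i) (y i)) l (𝓝 a)) :
    a = 0 := by
  have hsq : Tendsto (fun i ↦ tP (x i) (y i) ^ 2) l (𝓝 0) := by
    refine (tendsto_div_zero_of_tendsto_cobounded (hh.sub ht) hx).congr' ?_
    filter_upwards [hx.eventually_ne_cobounded 0] with i hi
    rw [hP_eq_mul_sq_add, add_sub_cancel_right, mul_div_cancel_left₀ _ hi]
  exact eq_zero_of_pow_eq_zero (tendsto_nhds_unique (ht.pow 2) hsq)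

theorem tendsto_fP_of_tendsto_hP (hx : Tendsto x l (cobounded ℝ))
    (ht : Tendsto (fun i ↦ tP (x i) (y i)) l (𝓝 0))
    (hh : Tendsto (fun i ↦ hP (x i) (y i)) l (𝓝 c)) :
    Tendsto (fun i ↦ fP (x i) (y i)) l (𝓝 (c * (c + 1))) := by
  have hlim := ((hh.add ht).add (tendsto_inv₀_cobounded.comp hx)).mul (hh.add_const 1)
  rw [add_zero, add_zero] at hlim
  refine hlim.congr' ?_
  filter_upwards [hx.eventually_ne_cobounded 0] with i hi
  exact (fP_eq_of_ne_zero (y i) hi).symm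

theorem tendsto_pinchuk_of_tendsto_hP (hx : Tendsto x l (cobounded ℝ))
    (ht : Tendsto (fun i ↦ tP (x i) (y i)) l (𝓝 0))
    (hh : Tendsto (fun i ↦ hP (x i) (y i)) l (𝓝 c)) :
    Tendsto (fun i ↦ Pinchuk (x i, y i)) l (𝓝 (pParam (c + 1), qParam (c + 1))) := by
  -- `(P, Q)` in the coordinates `v = (t, h, f)`
  have hpoly : Continuous fun v : ℝ × ℝ × ℝ ↦ (v.2.2 + v.2.1,
      -v.1 ^ 2 - 6 * v.1 * v.2.1 * (v.2.1 + 1) - 170 * v.2.2 * v.2.1 - 91 * v.2.1 ^ 2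
        - 195 * v.2.2 * v.2.1 ^ 2 - 69 * v.2.1 ^ 3 - 75 * v.2.2 * v.2.1 ^ 3
        - 75 / 4 * v.2.1 ^ 4) := by fun_prop
  have hval : (c * (c + 1) + c,
      -0 ^ 2 - 6 * 0 * c * (c + 1) - 170 * (c * (c + 1)) * c - 91 * c ^ 2
        - 195 * (c * (c + 1)) * c ^ 2 - 69 * c ^ 3 - 75 * (c * (c + 1)) * c ^ 3
        - 75 / 4 * c ^ 4) = (pParam (c + 1), qParam (c + 1)) := by
    rw [pParam, qParam, Prod.mk.injEq]
    constructor <;> ring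
  have hf := tendsto_fP_of_tendsto_hP hx ht hh
  exact (hpoly.tendsto' _ _ hval).comp (ht.prodMk_nhds (hh.prodMk_nhds hf))

end Limits

theorem exists_param_eq_of_tendsto_pinchuk {U : Ultrafilter (ℝ × ℝ)} {α : ℝ × ℝ}
    (hU : U ≤ cobounded (ℝ × ℝ)) (hα : Tendsto Pinchuk U (𝓝 α)) :
    ∃ s, (pParam s, qParam s) = α := by
  have hPP : Tendsto (fun z : ℝ × ℝ ↦ PP z.1 z.2) U (𝓝 α.1) := hα.fst_nhds
  have hQP : Tendsto (fun z : ℝ × ℝ ↦ QP z.1 z.2) U (𝓝 α.2) := hα.snd_nhds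
  obtain ⟨c, hh⟩ := (tendsto_cobounded_or_exists_tendsto_nhds U _).resolve_left
    (not_tendsto_hP_cobounded hPP hQP)
  have hf : Tendsto (fun z : ℝ × ℝ ↦ fP z.1 z.2) U (𝓝 (α.1 - c)) := by
    simpa only [PP, add_sub_cancel_right] using hPP.sub hh
  obtain ⟨t₀, ht⟩ := (tendsto_cobounded_or_exists_tendsto_nhds U _).resolve_left
    (not_tendsto_tP_cobounded hf hh hQP)
  have hx : Tendsto (fun z : ℝ × ℝ ↦ z.1) U (cobounded ℝ) := by
    rw [cobounded_prod, Filter.coprod, Ultrafilter.le_sup_iff] at hU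
    simp only [← tendsto_iff_comap] at hU
    exact hU.resolve_right (not_tendsto_snd_cobounded ht hf)
  obtain rfl : t₀ = 0 := eq_zero_of_tendsto_tP hx hh ht
  exact ⟨c + 1, tendsto_nhds_unique (tendsto_pinchuk_of_tendsto_hP hx ht hh) hα⟩

section HLevelCurve

/-- The level curve `h = c`, parametrized by the value of `t`: the relation `h = x * t ^ 2 + t`
determines `x`, and `t = x * y - 1` then determines `y`. It is undefined at `t = 0` and `t = c`,
where division by zero gives junk values. -/
def hLevelCurve (c t : ℝ) : ℝ × ℝ := ((c - t) / t ^ 2, (t + 1) * t ^ 2 / (c - t))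

variable {c t : ℝ}

theorem tP_hLevelCurve (ht : t ≠ 0) (htc : t ≠ c) :
    tP (hLevelCurve c t).1 (hLevelCurve c t).2 = t := by
  have hct : c - t ≠ 0 := sub_ne_zero.2 htc.symm
  simp only [tP, hLevelCurve]
  field_simp
  ring

theorem hP_hLevelCurve (ht : t ≠ 0) (htc : t ≠ c) :
    hP (hLevelCurve c t).1 (hLevelCurve c t).2 = c := by
  rw [hP_eq_mul_sq_add, tP_hLevelCurve ht htc, hLevelCurve, div_mul_cancel₀ _ (pow_ne_zero 2 ht),
    sub_add_cancel]

variable (c)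

theorem tendsto_hLevelCurve_fst_cobounded :
    Tendsto (fun t ↦ (hLevelCurve c t).1) (𝓝[≠] 0) (cobounded ℝ) := by
  have hlim : Tendsto (fun t : ℝ ↦ t ^ 2 / (c - t)) (𝓝 0) (𝓝 0) := by
    rcases eq_or_ne c 0 with rfl | hc
    · simpa [sq, div_neg] using (continuous_neg (G := ℝ)).tendsto 0
    · have : ContinuousAt (fun t : ℝ ↦ t ^ 2 / (c - t)) 0 :=
        ContinuousAt.div (by fun_prop) (by fun_prop) (by simpa)
      simpa [ContinuousAt] using this
  have hne : ∀ᶠ t in 𝓝[≠] (0 : ℝ), t ^ 2 / (c - t) ∈ ({0}ᶜ : Set ℝ) := by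
    filter_upwards [eventually_nhdsNE_ne_and_ne 0 c] with t ⟨ht, htc⟩
    exact div_ne_zero (pow_ne_zero 2 ht) (sub_ne_zero.2 htc.symm)
  refine (tendsto_inv₀_nhdsNE_zero.comp
    (tendsto_nhdsWithin_iff.2 ⟨hlim.mono_left nhdsWithin_le_nhds, hne⟩)).congr fun t ↦ ?_
  exact inv_div _ _

theorem tendsto_hLevelCurve_cobounded : Tendsto (hLevelCurve c) (𝓝[≠] 0) (cobounded (ℝ × ℝ)) := by
  rw [cobounded_prod]
  exact (tendsto_comap_iff.2 (tendsto_hLevelCurve_fst_cobounded c)).mono_right le_sup_left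

theorem tendsto_pinchuk_hLevelCurve :
    Tendsto (fun t ↦ Pinchuk (hLevelCurve c t)) (𝓝[≠] 0)
      (𝓝 (pParam (c + 1), qParam (c + 1))) := by
  refine tendsto_pinchuk_of_tendsto_hP (tendsto_hLevelCurve_fst_cobounded c) ?_ ?_
  · refine (tendsto_id.mono_left nhdsWithin_le_nhds).congr' ?_
    filter_upwards [eventually_nhdsNE_ne_and_ne 0 c] with t ⟨ht, htc⟩
    exact (tP_hLevelCurve ht htc).symm
  · refine tendsto_const_nhds.congr' ?_
    filter_upwards [eventually_nhdsNE_ne_and_ne 0 c] with t ⟨ht, htc⟩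
    exact (hP_hLevelCurve ht htc).symm

end HLevelCurve

theorem asymptoticVariety_pinchuk :
    asymptoticVariety Pinchuk = Set.range fun s ↦ (pParam s, qParam s) := by
  ext α
  constructor
  · intro hα
    obtain ⟨U, hU, hUα⟩ := mapClusterPt_iff_ultrafilter.1 hα
    exact exists_param_eq_of_tendsto_pinchuk hU hUα
  · rintro ⟨s, rfl⟩
    have hlim := (tendsto_pinchuk_hLevelCurve (s - 1)).mapClusterPt
    rw [sub_add_cancel] at hlim
    exact hlim.of_comp (tendsto_hLevelCurve_cobounded (s - 1))

/-- the asymptotic variety of the Pinchuk map is exactly the curve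
`{(p(s), q(s)) : s ∈ ℝ}`: a point `α ∈ ℝ²` is a limit of `𝒫(ξ k)` along a sequence
with `‖ξ k‖ → ∞` if and only if `α = (p s, q s)` for some `s ∈ ℝ`. -/
theorem pinchuk_asymptotic_variety (α : ℝ × ℝ) :
    (∃ ξ : ℕ → ℝ × ℝ, Tendsto (fun k => ‖ξ k‖) atTop atTop ∧
        Tendsto (fun k => Pinchuk (ξ k)) atTop (𝓝 α)) ↔
      ∃ s : ℝ, α = (pParam s, qParam s) := by
  rw [← mem_asymptoticVariety_iff_exists_seq, asymptoticVariety_pinchuk]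
  simp only [Set.mem_range, eq_comm]
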